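/- There exists a delivery instance (an unweighted path on five vertices u, h', b, v, w with the hub placed at h', the unique neighbor of the leaf u, and two agents) such that the set of EF1 allocations is nonempty and the set of non-wasteful allocations is nonempty, but no allocation is both EF1 and non-wasteful. -/

import Mathlib

/-- A delivery instance: a finite tree rooted at the hub (encoded by a parent
function `par`; the edges of the tree are the pairs `{v, par v}` for `v ≠ hub`),
positive edge weights (`w v` is the weight of the edge between `v` and its
parent, for `v ≠ hub`), and `n` agents. -/
structure DeliveryInstance where
  V : Type
  fintypeV : Fintype V
  decEqV : DecidableEq V
  hub : V
  par : V → V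
  w : V → ℝ
  par_hub : par hub = hub
  reaches_hub : ∀ v : V, ∃ k : ℕ, par^[k] v = hub
  w_pos : ∀ v : V, v ≠ hub → 0 < w v
  n : ℕ
  n_pos : 0 < n

attribute [instance] DeliveryInstance.fintypeV DeliveryInstance.decEqV

namespace DeliveryInstance

variable (I : DeliveryInstance)

/-- `u` lies on the path from the hub to `v` (equivalently, `u` is a weak
ancestor of `v` in the tree rooted at the hub). -/
def Anc (u v : I.V) : Prop := ∃ k : ℕ, I.par^[k] v = u

/-- A leaf of the tree rooted at the hub: a vertex with no children. -/
def IsLeaf (v : I.V) : Prop := ∀ u : I.V, I.par u = v → u = v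

/-- The set of leaves of the topology. -/
def leaves : Set I.V := {v : I.V | I.IsLeaf v}

/-- The instance is unweighted if every edge has weight 1. -/
def Unweighted : Prop := ∀ v : I.V, v ≠ I.hub → I.w v = 1

/-- The cost of servicing a set `A` of orders: the total weight of the edges of
the tree that lie on the path from the hub to some vertex of `A` (the edge
between `u ≠ hub` and its parent lies on such a path iff `u` is a weak ancestor
of a member of `A`).  In particular `cost ∅ = 0`. -/
noncomputable def cost (A : Set I.V) : ℝ :=
  ∑ u : I.V, Set.indicator {u : I.V | u ≠ I.hub ∧ ∃ v ∈ A, I.Anc u v} I.w u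

/-- The bundle of agent `i` under allocation `π`: the set of orders serviced by `i`. -/
def bundle (π : I.V → Fin I.n) (i : Fin I.n) : Set I.V :=
  {v : I.V | v ≠ I.hub ∧ π v = i}

/-- An allocation is non-wasteful if every order `v` is serviced by an agent
that also services some leaf of the subtree rooted at `v`. -/
def NonWasteful (π : I.V → Fin I.n) : Prop :=
  ∀ v : I.V, v ≠ I.hub → ∃ l : I.V, I.IsLeaf l ∧ I.Anc v l ∧ π l = π v

/-- Total (utilitarian) cost of an allocation. -/
noncomputable def totalCost (π : I.V → Fin I.n) : ℝ :=
  ∑ i : Fin I.n, I.cost (I.bundle π i)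

/-- The maximum bundle cost of an allocation. -/
noncomputable def maxCost (π : I.V → Fin I.n) : ℝ :=
  Finset.univ.sup' ⟨⟨0, I.n_pos⟩, Finset.mem_univ _⟩ fun i : Fin I.n => I.cost (I.bundle π i)

/-- The minimax (MMS) share of the instance: the minimum over all allocations
of the maximum bundle cost. -/
noncomputable def MMSshare : ℝ :=
  Finset.univ.inf' ⟨fun _ => ⟨0, I.n_pos⟩, Finset.mem_univ _⟩
    fun π : I.V → Fin I.n => I.maxCost π

/-- An allocation is MMS if every bundle costs at most the MMS share. -/
def IsMMS (π : I.V → Fin I.n) : Prop :=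
  ∀ i : Fin I.n, I.cost (I.bundle π i) ≤ I.MMSshare

/-- Pareto optimality: no allocation makes every agent weakly better off and
some agent strictly better off. -/
def ParetoOptimal (π : I.V → Fin I.n) : Prop :=
  ¬ ∃ π' : I.V → Fin I.n,
      (∀ i : Fin I.n, I.cost (I.bundle π' i) ≤ I.cost (I.bundle π i)) ∧
      ∃ j : Fin I.n, I.cost (I.bundle π' j) < I.cost (I.bundle π j)

/-- Utilitarian optimality: minimizes the sum of bundle costs. -/
def UtilitarianOptimal (π : I.V → Fin I.n) : Prop :=
  ∀ π' : I.V → Fin I.n, I.totalCost π ≤ I.totalCost π'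

/-- Egalitarian optimality: minimizes the maximum bundle cost. -/
def EgalitarianOptimal (π : I.V → Fin I.n) : Prop :=
  ∀ π' : I.V → Fin I.n, I.maxCost π ≤ I.maxCost π'

/-- Envy-freeness. -/
def EF (π : I.V → Fin I.n) : Prop :=
  ∀ i j : Fin I.n, I.cost (I.bundle π i) ≤ I.cost (I.bundle π j)

/-- Envy-freeness up to one order. -/
def EF1 (π : I.V → Fin I.n) : Prop :=
  ∀ i j : Fin I.n,
    I.bundle π i = ∅ ∨ ∃ v ∈ I.bundle π i, I.cost (I.bundle π i \ {v}) ≤ I.cost (I.bundle π j)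

end DeliveryInstance

namespace DeliveryInstance

variable {I : DeliveryInstance}

theorem Anc.refl (v : I.V) : I.Anc v v := ⟨0, rfl⟩

theorem Anc.trans {u v x : I.V} : I.Anc u v → I.Anc v x → I.Anc u x := by
  rintro ⟨j, rfl⟩ ⟨k, rfl⟩
  exact ⟨j + k, Function.iterate_add_apply ..⟩

theorem anc_par (v : I.V) : I.Anc (I.par v) v := ⟨1, rfl⟩

theorem anc_hub_iff {u : I.V} : I.Anc u I.hub ↔ u = I.hub := by
  constructor
  · rintro ⟨k, rfl⟩
    exact Function.iterate_fixed I.par_hub k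
  · rintro rfl
    exact Anc.refl _

theorem anc_iff_eq_or_anc_par {u v : I.V} : I.Anc u v ↔ u = v ∨ I.Anc u (I.par v) := by
  constructor
  · rintro ⟨_ | k, rfl⟩
    · exact .inl rfl
    · exact .inr ⟨k, rfl⟩
  · rintro (rfl | h)
    · exact Anc.refl _
    · exact h.trans (anc_par v)

variable (I) in
/-- The depth of `v`: the number of edges on the path from the hub to `v`. It is the measure that
rules out cycles of parents and bounds descending paths. -/
def depth (v : I.V) : ℕ := Nat.find (I.reaches_hub v)

theorem depth_par_lt {v : I.V} (hv : v ≠ I.hub) : I.depth (I.par v) < I.depth v := by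
  have hspec : I.par^[I.depth v] v = I.hub := Nat.find_spec (I.reaches_hub v)
  cases hd : I.depth v with
  | zero => exact absurd (hd ▸ hspec : I.par^[0] v = I.hub) hv
  | succ d =>
    rw [hd, Function.iterate_succ_apply] at hspec
    exact Nat.lt_succ_of_le (Nat.find_min' _ hspec)

theorem depth_par_le (v : I.V) : I.depth (I.par v) ≤ I.depth v := by
  obtain rfl | hv := eq_or_ne v I.hub
  · rw [I.par_hub]
  · exact (depth_par_lt hv).le

theorem Anc.depth_le {u v : I.V} : I.Anc u v → I.depth u ≤ I.depth v := by
  rintro ⟨k, rfl⟩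
  induction k with
  | zero => exact le_rfl
  | succ k ih =>
    rw [Function.iterate_succ_apply']
    exact (depth_par_le _).trans ih

theorem not_anc_par {v : I.V} (hv : v ≠ I.hub) : ¬ I.Anc v (I.par v) :=
  fun h ↦ (depth_par_lt hv).not_ge h.depth_le

theorem exists_isLeaf_anc (v : I.V) : ∃ l, I.IsLeaf l ∧ I.Anc v l := by
  obtain ⟨l, hvl, hmax⟩ :=
    Set.exists_max_image {x | I.Anc v x} I.depth (Set.toFinite _) ⟨v, Anc.refl v⟩
  refine ⟨l, fun u hul ↦ ?_, hvl⟩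
  subst hul
  by_contra hne
  have hu : u ≠ I.hub := fun h ↦ hne (by rw [h, I.par_hub])
  exact (depth_par_lt hu).not_ge (hmax u (hvl.trans (anc_par u)))

variable (I) in
/-- The edges used when servicing `A`, that is, those lying on the path from the hub to some vertex
of `A`. An edge is encoded by its endpoint farther from the hub. -/
def route (A : Set I.V) : Set I.V := {u | u ≠ I.hub ∧ ∃ v ∈ A, I.Anc u v}

theorem cost_eq_sum_indicator_route (A : Set I.V) :
    I.cost A = ∑ u, (I.route A).indicator I.w u := rfl

theorem cost_le_of_route_subset {A B : Set I.V} (h : I.route A ⊆ I.route B) :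
    I.cost A ≤ I.cost B := by
  have hnonneg : 0 ≤ (I.route B).indicator I.w :=
    Set.indicator_nonneg fun u hu ↦ (I.w_pos u hu.1).le
  have hle : (I.route A).indicator I.w ≤ (I.route B).indicator I.w :=
    Set.indicator_le' (fun u hu ↦ (Set.indicator_of_mem (h hu) I.w).ge) fun u _ ↦ hnonneg u
  exact Finset.sum_le_sum fun u _ ↦ hle u

theorem cost_mono : Monotone I.cost := fun _ _ hAB ↦
  cost_le_of_route_subset fun _ ⟨hu, v, hv, huv⟩ ↦ ⟨hu, v, hAB hv, huv⟩

theorem cost_insert_of_anc {A : Set I.V} {u v : I.V} (huv : I.Anc u v) (hv : v ∈ A) :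
    I.cost (insert u A) = I.cost A := by
  refine le_antisymm (cost_le_of_route_subset ?_) (cost_mono (Set.subset_insert u A))
  rintro x ⟨hx, y, rfl | hy, hxy⟩
  · exact ⟨hx, v, hv, hxy.trans huv⟩
  · exact ⟨hx, y, hy, hxy⟩

theorem Anc.cost_singleton_le {A : Set I.V} {u v : I.V} (huv : I.Anc u v) (hv : v ∈ A) :
    I.cost {u} ≤ I.cost A :=
  (cost_mono (Set.singleton_subset_iff.2 (Set.mem_insert u A))).trans_eq
    (cost_insert_of_anc huv hv)

theorem cost_union_of_disjoint_route {A B : Set I.V} (h : Disjoint (I.route A) (I.route B)) :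
    I.cost (A ∪ B) = I.cost A + I.cost B := by
  have hunion : I.route (A ∪ B) = I.route A ∪ I.route B := by
    ext u
    simp only [route, Set.mem_union, Set.mem_ofPred_eq, or_and_right, exists_or, and_or_left]
  simp only [cost_eq_sum_indicator_route, hunion, Set.indicator_union_of_disjoint h,
    Finset.sum_add_distrib]

theorem cost_singleton_hub : I.cost {I.hub} = 0 := by
  have hroute : I.route {I.hub} = ∅ := by
    refine Set.eq_empty_of_forall_notMem ?_
    rintro u ⟨hu, _, rfl, h⟩
    exact hu (anc_hub_iff.1 h)
  simp only [cost_eq_sum_indicator_route, hroute, Set.indicator_empty, Finset.sum_const_zero]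

theorem cost_singleton_of_ne_hub {v : I.V} (hv : v ≠ I.hub) :
    I.cost {v} = I.w v + I.cost {I.par v} := by
  have hroute : I.route {v} = {v} ∪ I.route {I.par v} := by
    ext u
    simp only [route, Set.mem_singleton_iff, exists_eq_left, Set.mem_union, Set.mem_ofPred_eq]
    rw [anc_iff_eq_or_anc_par]
    grind
  have hdisj : Disjoint {v} (I.route {I.par v}) := by
    rw [Set.disjoint_singleton_left]
    rintro ⟨-, _, rfl, h⟩
    exact not_anc_par hv h
  have hsum : ∑ u, ({v} : Set I.V).indicator I.w u = I.w v := by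
    simp [Set.indicator_apply]
  simp only [cost_eq_sum_indicator_route, hroute, Set.indicator_union_of_disjoint hdisj,
    Finset.sum_add_distrib, hsum]

theorem EF.ef1 {π : I.V → Fin I.n} (h : I.EF π) : I.EF1 π := fun i j ↦
  (I.bundle π i).eq_empty_or_nonempty.imp_right fun ⟨v, hv⟩ ↦
    ⟨v, hv, (cost_mono Set.sdiff_subset).trans (h i j)⟩

theorem nonWasteful_const (i : Fin I.n) : I.NonWasteful fun _ ↦ i := fun v _ ↦
  let ⟨l, hl, hvl⟩ := exists_isLeaf_anc v
  ⟨l, hl, hvl, rfl⟩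

theorem NonWasteful.eq_of_unique_leaf {π : I.V → Fin I.n} (h : I.NonWasteful π) {v l : I.V}
    (hv : v ≠ I.hub) (hl : ∀ x, I.IsLeaf x → I.Anc v x → x = l) : π v = π l := by
  obtain ⟨x, hx, hvx, hπ⟩ := h v hv
  rw [← hπ, hl x hx hvx]

/-- Non-wastefulness forces the branch below `b` onto one agent `i`, since `l` is its only leaf.
Whichever order is dropped, `i` still travels as far as `p`, while any other agent works
outside the branch. -/
theorem NonWasteful.cost_singleton_le_cost_not_anc {π : I.V → Fin I.n} (hNW : I.NonWasteful π)
    (hEF1 : I.EF1 π) (hn : 2 ≤ I.n) {b p l : I.V} (hb : b ≠ I.hub)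
    (hl : ∀ x, I.IsLeaf x → I.Anc b x → x = l) (hbp : I.Anc b p) (hpl : I.Anc p l)
    (hne : p ≠ l) : I.cost {p} ≤ I.cost {x | ¬ I.Anc b x} := by
  have hbranch {x : I.V} (hbx : I.Anc b x) : x ∈ I.bundle π (π l) := by
    have hx : x ≠ I.hub := by
      rintro rfl
      exact hb (anc_hub_iff.1 hbx)
    exact ⟨hx, hNW.eq_of_unique_leaf hx fun y hy hxy ↦ hl y hy (hbx.trans hxy)⟩
  have hlower (x : I.V) : I.cost {p} ≤ I.cost (I.bundle π (π l) \ {x}) := by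
    obtain rfl | hx := eq_or_ne l x
    · exact (Anc.refl p).cost_singleton_le ⟨hbranch hbp, hne⟩
    · exact hpl.cost_singleton_le ⟨hbranch (hbp.trans hpl), hx⟩
  have : Nontrivial (Fin I.n) := Fin.nontrivial_iff_two_le.2 hn
  obtain ⟨j, hj⟩ := exists_ne (π l)
  have hupper : I.bundle π j ⊆ {x | ¬ I.Anc b x} := fun x hx hbx ↦
    hj (hx.2.symm.trans (hbranch hbx).2)
  obtain hempty | ⟨x, -, hx⟩ := hEF1 (π l) j
  · exact absurd (hbranch hbp) (hempty ▸ Set.notMem_empty p)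
  · exact (hlower x).trans (hx.trans (cost_mono hupper))

end DeliveryInstance

/-- The vertices of the path `u, h', b, v, w`, where `hub` is `h'`. -/
inductive PathVertex
  | u | hub | b | v | w
  deriving DecidableEq

namespace PathVertex

open DeliveryInstance

/-- The parent function of the path `u, h', b, v, w` rooted at `h'`. -/
def parent : PathVertex → PathVertex
  | u => hub
  | hub => hub
  | b => hub
  | v => b
  | w => v

/-- The unweighted two-agent instance on the path `u, h', b, v, w` with hub `h'`, which is the
witness of the theorem. It is reducible so that its vertices are recognised as `PathVertex`. -/
abbrev pathInstance : DeliveryInstance where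
  V := PathVertex
  fintypeV := ⟨{u, hub, b, v, w}, fun x ↦ by cases x <;> simp⟩
  decEqV := inferInstance
  hub := hub
  par := parent
  w := fun _ ↦ 1
  par_hub := rfl
  reaches_hub := fun x ↦ ⟨3, by cases x <;> rfl⟩
  w_pos := fun _ _ ↦ one_pos
  n := 2
  n_pos := two_pos

theorem anc_hub_iff {x : PathVertex} : pathInstance.Anc x hub ↔ x = hub :=
  DeliveryInstance.anc_hub_iff

theorem anc_u_iff {x : PathVertex} : pathInstance.Anc x u ↔ x = u ∨ x = hub :=
  anc_iff_eq_or_anc_par.trans (or_congr_right anc_hub_iff)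

theorem anc_b_iff {x : PathVertex} : pathInstance.Anc x b ↔ x = b ∨ x = hub :=
  anc_iff_eq_or_anc_par.trans (or_congr_right anc_hub_iff)

theorem anc_v_iff {x : PathVertex} : pathInstance.Anc x v ↔ x = v ∨ x = b ∨ x = hub :=
  anc_iff_eq_or_anc_par.trans (or_congr_right anc_b_iff)

theorem b_anc_w : pathInstance.Anc b w := ⟨2, rfl⟩

theorem cost_singleton_hub : pathInstance.cost {hub} = 0 := DeliveryInstance.cost_singleton_hub

theorem cost_singleton_eq_one_add (x : PathVertex) (hx : x ≠ hub) :
    pathInstance.cost {x} = 1 + pathInstance.cost {parent x} :=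
  cost_singleton_of_ne_hub (I := pathInstance) hx

theorem cost_singleton_u : pathInstance.cost {u} = 1 := by
  rw [cost_singleton_eq_one_add u nofun, parent, cost_singleton_hub, add_zero]

theorem cost_singleton_b : pathInstance.cost {b} = 1 := by
  rw [cost_singleton_eq_one_add b nofun, parent, cost_singleton_hub, add_zero]

theorem cost_singleton_v : pathInstance.cost {v} = 2 := by
  rw [cost_singleton_eq_one_add v nofun, parent, cost_singleton_b, one_add_one_eq_two]

theorem cost_singleton_w : pathInstance.cost {w} = 3 := by
  rw [cost_singleton_eq_one_add w nofun, parent, cost_singleton_v]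
  norm_num

theorem cost_pair_u_v : pathInstance.cost {u, v} = 3 := by
  have hdisj : Disjoint (pathInstance.route {u}) (pathInstance.route {v}) := by
    rw [Set.disjoint_left]
    rintro x ⟨hx, _, rfl, hxu⟩ ⟨-, _, rfl, hxv⟩
    grind [anc_u_iff, anc_v_iff]
  rw [Set.insert_eq, cost_union_of_disjoint_route hdisj, cost_singleton_u, cost_singleton_v]
  norm_num

theorem cost_pair_b_w : pathInstance.cost {b, w} = 3 :=
  (cost_insert_of_anc b_anc_w (Set.mem_singleton w)).trans cost_singleton_w

theorem cost_not_anc_b : pathInstance.cost {x | ¬ pathInstance.Anc b x} = 1 := by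
  have hcompl : {x | ¬ pathInstance.Anc b x} = {hub, u} := by
    ext x
    cases x
    case u | hub => simp [anc_u_iff, anc_hub_iff]
    case b => simp [Anc.refl]
    case v => simp [anc_v_iff]
    case w => simp [b_anc_w]
  have hhub : pathInstance.Anc hub u := anc_u_iff.2 (.inr rfl)
  rw [hcompl]
  exact (cost_insert_of_anc hhub (Set.mem_singleton u)).trans cost_singleton_u

theorem eq_w_of_isLeaf_of_anc_b (x : PathVertex) (hx : pathInstance.IsLeaf x)
    (hbx : pathInstance.Anc b x) : x = w := by
  cases x with
  | u => simp [anc_u_iff] at hbx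
  | hub => simp [anc_hub_iff] at hbx
  | b => cases hx v rfl
  | v => cases hx w rfl
  | w => rfl

/-- An envy-free allocation: the orders `u` and `v` go to one agent and `b` and `w` to the other,
at a cost of `3` to each. -/
def envyFreeAllocation : PathVertex → Fin 2
  | u | v | hub => 0
  | b | w => 1

theorem ef_envyFreeAllocation : pathInstance.EF envyFreeAllocation := by
  have hbundle₀ : pathInstance.bundle envyFreeAllocation (0 : Fin 2) = {u, v} := by
    ext x
    cases x <;> simp [bundle, envyFreeAllocation]
  have hbundle₁ : pathInstance.bundle envyFreeAllocation (1 : Fin 2) = {b, w} := by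
    ext x
    cases x <;> simp [bundle, envyFreeAllocation]
  have hcost : ∀ i : Fin 2, pathInstance.cost (pathInstance.bundle envyFreeAllocation i) = 3 :=
    Fin.forall_fin_two.2 ⟨hbundle₀ ▸ cost_pair_u_v, hbundle₁ ▸ cost_pair_b_w⟩
  exact fun i j ↦ ((hcost i).trans (hcost j).symm).le

theorem not_ef1_of_nonWasteful {π : PathVertex → Fin 2} (hNW : pathInstance.NonWasteful π) :
    ¬ pathInstance.EF1 π := by
  intro hEF1
  have h : pathInstance.cost {v} ≤ pathInstance.cost {x | ¬ pathInstance.Anc b x} :=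
    hNW.cost_singleton_le_cost_not_anc hEF1 le_rfl nofun eq_w_of_isLeaf_of_anc_b
      (anc_par (I := pathInstance) v) (anc_par (I := pathInstance) w) nofun
  rw [cost_singleton_v, cost_not_anc_b] at h
  norm_num at h

end PathVertex

/-- There is an unweighted two-agent instance whose topology
is a path on five vertices `u, h', b, v, w` with the hub at `h'` (the unique
neighbor of the leaf `u`), such that EF1 allocations exist and non-wasteful
allocations exist, but no allocation is both. -/
theorem stmt18 :
    ∃ (I : DeliveryInstance) (u b v w : I.V),
      I.Unweighted ∧ I.n = 2 ∧
      u ≠ I.hub ∧ b ≠ I.hub ∧ v ≠ I.hub ∧ w ≠ I.hub ∧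
      u ≠ b ∧ u ≠ v ∧ u ≠ w ∧ b ≠ v ∧ b ≠ w ∧ v ≠ w ∧
      (∀ x : I.V, x = I.hub ∨ x = u ∨ x = b ∨ x = v ∨ x = w) ∧
      I.par u = I.hub ∧ I.par b = I.hub ∧ I.par v = b ∧ I.par w = v ∧
      (∃ π : I.V → Fin I.n, I.EF1 π) ∧
      (∃ π : I.V → Fin I.n, I.NonWasteful π) ∧
      ¬ ∃ π : I.V → Fin I.n, I.EF1 π ∧ I.NonWasteful π := by
  open PathVertex in
  exact ⟨pathInstance, u, b, v, w, fun _ _ ↦ rfl, rfl, nofun, nofun, nofun, nofun, nofun, nofun,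
    nofun, nofun, nofun, nofun, by rintro ⟨⟩ <;> simp, rfl, rfl, rfl, rfl,
    ⟨envyFreeAllocation, ef_envyFreeAllocation.ef1⟩,
    ⟨fun _ ↦ 0, DeliveryInstance.nonWasteful_const _⟩,
    fun ⟨_, hEF1, hNW⟩ ↦ not_ef1_of_nonWasteful hNW hEF1⟩
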